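/- For every integer radius r ≥ 1, let H(r) = 8r² / ( Σ_{n=0}^{2r−1} a_n ), where a_n = x_n + y_n is the Manhattan distance to the origin of the n-th point of the signum circle path of radius r (this is the harmonic mean of the values π_n = 4r/a_n). Then H(r) converges to 16/(π + 2) as r → ∞. -/

import Mathlib

/-!
Up to a positive factor, the argument of `sgn` in `sₙ` is the sum of the distances from `(aₙ, cₙ)`
to the foci `(±1, 0)` minus `2√2 r`. Hence `aₙ` goes up exactly when `(aₙ, cₙ)` lies in an ellipse
which is within bounded distance of the disc of radius `√2 r`. As `cₙ` moves by unit steps through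
`[-r, r]`, the ordinate `√(2r² - cₙ²)` of the circle of radius `√2 r` changes by at most `1` per
step, so the unit steps of `aₙ` keep up with it and `aₙ = √(2r² - cₙ²) + O(1)`. Comparing the sum
with an integral,
`∑ aₙ = ∫_{-r}^{r} √(2r² - x²) dx + O(r) = (1 + π/2) r² + O(r)`.
-/

open Filter Finset Real

/-- The signum function of the paper: `-1` if `t ≤ 0` and `1` if `t > 0`. -/
noncomputable def sgn (t : ℝ) : ℝ := if t ≤ 0 then -1 else 1

/-- The signum term `sₙ` determining the step of the path, computed from the
current position `(x, y)`, with `a = x + y` and `c = r - n - 1`. -/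
noncomputable def sStep (r n : ℕ) (x y : ℝ) : ℝ :=
  -sgn ((x + y) + (r : ℝ) / Real.sqrt 2 *
    (Real.sqrt (((x + y) - 1) ^ 2 + ((r : ℝ) - n - 1) ^ 2) -
     Real.sqrt (((x + y) + 1) ^ 2 + ((r : ℝ) - n - 1) ^ 2)))

/-- The signum circle path of radius `r`: `x₀ = r`, `y₀ = 0`,
`xₙ₊₁ = xₙ + sₙ/2 - 1/2`, `yₙ₊₁ = yₙ + sₙ/2 + 1/2`. -/
noncomputable def circlePath (r : ℕ) : ℕ → ℝ × ℝ
  | 0 => ((r : ℝ), 0)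
  | n + 1 =>
    let p := circlePath r n
    let s := sStep r n p.1 p.2
    (p.1 + s / 2 - 1 / 2, p.2 + s / 2 + 1 / 2)

/-- The signum term `sₙ` along the signum circle path of radius `r`. -/
noncomputable def sTerm (r n : ℕ) : ℝ := sStep r n (circlePath r n).1 (circlePath r n).2

section FocalSum

/-- The sum of the Euclidean distances from the point `(a, c)` to the foci `(1, 0)` and `(-1, 0)`;
its sublevel sets are the ellipses which govern the steps of the path. -/
noncomputable def focalSum (a c : ℝ) : ℝ := √((a - 1) ^ 2 + c ^ 2) + √((a + 1) ^ 2 + c ^ 2)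

lemma two_le_focalSum (a c : ℝ) : 2 ≤ focalSum a c := by
  have h₁ : |a - 1| ≤ √((a - 1) ^ 2 + c ^ 2) :=
    abs_le_sqrt (le_add_of_nonneg_right (sq_nonneg c))
  have h₂ : |a + 1| ≤ √((a + 1) ^ 2 + c ^ 2) :=
    abs_le_sqrt (le_add_of_nonneg_right (sq_nonneg c))
  unfold focalSum
  linarith [neg_le_abs (a - 1), le_abs_self (a + 1)]

lemma sqrt_sub_sqrt_eq_neg_div_focalSum (a c : ℝ) :
    √((a - 1) ^ 2 + c ^ 2) - √((a + 1) ^ 2 + c ^ 2) = -(4 * a) / focalSum a c := by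
  have hpos : 0 < focalSum a c := two_pos.trans_le (two_le_focalSum a c)
  rw [eq_div_iff hpos.ne', focalSum]
  linear_combination sq_sqrt (by positivity : 0 ≤ (a - 1) ^ 2 + c ^ 2) -
    sq_sqrt (by positivity : 0 ≤ (a + 1) ^ 2 + c ^ 2)

lemma focalSum_sq_le (a c : ℝ) : focalSum a c ^ 2 ≤ 4 * (a ^ 2 + c ^ 2 + 1) := by
  calc focalSum a c ^ 2
      ≤ 2 * (√((a - 1) ^ 2 + c ^ 2) ^ 2 + √((a + 1) ^ 2 + c ^ 2) ^ 2) := add_sq_le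
    _ = 4 * (a ^ 2 + c ^ 2 + 1) := by
      rw [sq_sqrt (by positivity), sq_sqrt (by positivity)]
      ring

lemma le_focalSum_sq (a c : ℝ) : 4 * (a ^ 2 + c ^ 2) ≤ focalSum a c ^ 2 := by
  have hprod : a ^ 2 + c ^ 2 - 1 ≤ √((a - 1) ^ 2 + c ^ 2) * √((a + 1) ^ 2 + c ^ 2) := by
    rw [← sqrt_mul (by positivity)]
    exact le_sqrt_of_sq_le (by nlinarith [sq_nonneg c])
  rw [focalSum, add_sq, sq_sqrt (by positivity), sq_sqrt (by positivity)]
  linarith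

lemma add_mul_sqrt_sub_sqrt_nonpos_iff {a : ℝ} (ha : 0 < a) (c R : ℝ) :
    a + R / √2 * (√((a - 1) ^ 2 + c ^ 2) - √((a + 1) ^ 2 + c ^ 2)) ≤ 0 ↔
      focalSum a c ≤ 2 * √2 * R := by
  have hpos : 0 < focalSum a c := two_pos.trans_le (two_le_focalSum a c)
  have hfactor : a + R / √2 * (-(4 * a) / focalSum a c) =
      a / focalSum a c * (focalSum a c - 2 * √2 * R) := by
    field_simp
    linear_combination 2 * R * sq_sqrt (zero_le_two : (0 : ℝ) ≤ 2)
  rw [sqrt_sub_sqrt_eq_neg_div_focalSum, hfactor,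
    mul_nonpos_iff_pos_imp_nonpos.trans (and_iff_left_of_imp fun _ _ => by positivity)]
  simp [div_pos ha hpos]

end FocalSum

section CircleArc

/-- The ordinate at `x` of the upper half of the circle of radius `√2 * R` about the origin, the
curve which the Manhattan distance along the signum circle path of radius `R` follows. The square
root makes it `0` where `|x| > √2 * |R|`. -/
noncomputable def circleArc (R x : ℝ) : ℝ := √(2 * R ^ 2 - x ^ 2)

variable {R x : ℝ}

lemma le_circleArc (hx : |x| ≤ |R|) : R ≤ circleArc R x :=
  le_sqrt_of_sq_le (by linarith [sq_le_sq.2 hx])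

lemma circleArc_sq (hx : |x| ≤ |R|) : circleArc R x ^ 2 = 2 * R ^ 2 - x ^ 2 :=
  sq_sqrt (by linarith [sq_le_sq.2 hx, sq_nonneg R])

lemma abs_le_circleArc (hx : |x| ≤ |R|) : |x| ≤ circleArc R x :=
  abs_le_sqrt (by linarith [sq_le_sq.2 hx])

lemma lipschitzOnWith_circleArc (R : ℝ) :
    LipschitzOnWith 1 (circleArc R) (Set.Icc (-R) R) := by
  refine LipschitzOnWith.of_dist_le_mul fun x hx y hy => ?_
  rw [NNReal.coe_one, one_mul, dist_eq, dist_eq]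
  replace hx : |x| ≤ |R| := (abs_le.2 hx).trans (le_abs_self R)
  replace hy : |y| ≤ |R| := (abs_le.2 hy).trans (le_abs_self R)
  set s := circleArc R x
  set t := circleArc R y
  have hs : |x| ≤ s := abs_le_circleArc hx
  have ht : |y| ≤ t := abs_le_circleArc hy
  have hst : 0 ≤ s + t := by linarith [abs_nonneg x, abs_nonneg y]
  have hmul : |s - t| * (s + t) ≤ |x - y| * (s + t) := calc
    |s - t| * (s + t) = |s ^ 2 - t ^ 2| := by
      rw [sq_sub_sq, abs_mul, abs_of_nonneg hst, mul_comm]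
    _ = |x - y| * |x + y| := by
      rw [circleArc_sq hx, circleArc_sq hy, ← abs_mul, ← abs_neg]
      ring_nf
    _ ≤ |x - y| * (s + t) := by
      gcongr
      exact (abs_add_le x y).trans (add_le_add hs ht)
  rcases hst.eq_or_lt with hzero | hpos
  · have : s = t := by linarith [abs_nonneg x, abs_nonneg y]
    simp [this]
  · exact le_of_mul_le_mul_right hmul hpos

lemma le_circleArc_of_focalSum_le {a c : ℝ} (h : focalSum a c ≤ 2 * √2 * R) :
    a ≤ circleArc R c := by
  have hsq : focalSum a c ^ 2 ≤ (2 * √2 * R) ^ 2 :=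
    pow_le_pow_left₀ (zero_le_two.trans (two_le_focalSum a c)) h 2
  rw [mul_pow, mul_pow, sq_sqrt zero_le_two] at hsq
  exact le_sqrt_of_sq_le (by linarith [le_focalSum_sq a c])

lemma circleArc_sub_one_le_of_lt_focalSum {a c : ℝ} (hR : 0 ≤ R) (ha : 0 ≤ a)
    (h : 2 * √2 * R < focalSum a c) : circleArc R c - 1 ≤ a := by
  have hsq : (2 * √2 * R) ^ 2 ≤ focalSum a c ^ 2 := by gcongr
  rw [mul_pow, mul_pow, sq_sqrt zero_le_two] at hsq
  rw [sub_le_iff_le_add, circleArc, sqrt_le_left (by positivity)]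
  linarith [focalSum_sq_le a c]

lemma integral_sqrt_sq_sub_sq {ρ α β : ℝ} (hρ : 0 ≤ ρ) (hα : α ∈ Set.Icc (-(π / 2)) (π / 2))
    (hβ : β ∈ Set.Icc (-(π / 2)) (π / 2)) :
    ∫ x in ρ * sin α..ρ * sin β, √(ρ ^ 2 - x ^ 2) =
      ρ ^ 2 * ((cos β * sin β - cos α * sin α + β - α) / 2) := by
  have hsqrt : ∀ θ ∈ Set.uIcc α β, √(ρ ^ 2 - (ρ * sin θ) ^ 2) = ρ * cos θ := fun θ hθ => by
    have hcos : 0 ≤ cos θ := cos_nonneg_of_mem_Icc (Set.uIcc_subset_Icc hα hβ hθ)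
    rw [← sqrt_sq (mul_nonneg hρ hcos), mul_pow ρ (cos θ), cos_sq']
    ring_nf
  calc ∫ x in ρ * sin α..ρ * sin β, √(ρ ^ 2 - x ^ 2)
      = ∫ θ in α..β, √(ρ ^ 2 - (ρ * sin θ) ^ 2) * (ρ * cos θ) :=
        (intervalIntegral.integral_comp_mul_deriv (g := fun x => √(ρ ^ 2 - x ^ 2))
          (fun θ _ => (hasDerivAt_sin θ).const_mul ρ) (by fun_prop) (by fun_prop)).symm
    _ = ∫ θ in α..β, ρ ^ 2 * cos θ ^ 2 :=
        intervalIntegral.integral_congr fun θ hθ => by simp only [hsqrt θ hθ]; ring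
    _ = ρ ^ 2 * ((cos β * sin β - cos α * sin α + β - α) / 2) := by
        rw [intervalIntegral.integral_const_mul, integral_cos_sq]

lemma integral_circleArc (hR : 0 ≤ R) :
    ∫ x in -R..R, circleArc R x = R ^ 2 * (1 + π / 2) := by
  have hsqrt : √2 * √2 = (2 : ℝ) := mul_self_sqrt zero_le_two
  have hρ : (√2 * R) ^ 2 = 2 * R ^ 2 := by rw [mul_pow, sq_sqrt zero_le_two]
  have hsin : √2 * R * sin (π / 4) = R := by
    rw [sin_pi_div_four]
    linear_combination R / 2 * hsqrt
  have hintegral := integral_sqrt_sq_sub_sq (ρ := √2 * R) (α := -(π / 4)) (β := π / 4)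
    (by positivity)
    ⟨by linarith [pi_pos], by linarith [pi_pos]⟩ ⟨by linarith [pi_pos], by linarith [pi_pos]⟩
  rw [sin_neg, mul_neg, hsin, hρ, cos_neg, cos_pi_div_four, sin_pi_div_four] at hintegral
  simp only [circleArc]
  rw [hintegral]
  linear_combination R ^ 2 / 2 * hsqrt

end CircleArc

section Tracking

/-- One extra unit of error comes from the motion of `f` and one from the step of `a` itself. -/
lemma abs_sub_le_of_unit_steps_toward {a f : ℕ → ℝ} {N : ℕ} {δ : ℝ} (hδ : 0 ≤ δ)
    (hf : ∀ n, n + 1 < N → |f (n + 1) - f n| ≤ 1) (h₀ : |a 0 - f 0| ≤ 2 + δ)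
    (hstep : ∀ n, n + 1 < N → |a n - f n| ≤ 2 + δ →
      (a (n + 1) = a n + 1 ∧ a n ≤ f n) ∨ (a (n + 1) = a n - 1 ∧ f n - δ ≤ a n)) :
    ∀ n < N, |a n - f n| ≤ 2 + δ := by
  intro n hn
  induction n with
  | zero => exact h₀
  | succ n ih =>
    have hprev := ih (by omega)
    obtain ⟨hlo, hhi⟩ := abs_le.1 hprev
    obtain ⟨hflo, hfhi⟩ := abs_le.1 (hf n hn)
    rw [abs_le]
    rcases hstep n hn hprev with ⟨hup, hle⟩ | ⟨hdown, hge⟩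
    · constructor <;> linarith
    · constructor <;> linarith

end Tracking

section SignumCirclePath

/-- The Manhattan distance `aₙ` of the `n`-th point of the path to the origin, written `xₙ + yₙ`
without absolute values as in the definition of `sStep`. -/
noncomputable def pathDist (r n : ℕ) : ℝ := (circlePath r n).1 + (circlePath r n).2

lemma pathDist_zero (r : ℕ) : pathDist r 0 = r := add_zero _

lemma pathDist_succ (r n : ℕ) : pathDist r (n + 1) = pathDist r n + sTerm r n := by
  simp only [pathDist, circlePath, sTerm]
  ring

lemma sTerm_eq_ite {r n : ℕ} (ha : 0 < pathDist r n) :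
    sTerm r n = if focalSum (pathDist r n) (r - n - 1) ≤ 2 * √2 * r then 1 else -1 := by
  simp only [← add_mul_sqrt_sub_sqrt_nonpos_iff ha]
  unfold sTerm sStep sgn pathDist
  split_ifs <;> norm_num

lemma pathDist_succ_dichotomy {r n : ℕ} (ha : 0 < pathDist r n) :
    (pathDist r (n + 1) = pathDist r n + 1 ∧ pathDist r n ≤ circleArc r (r - n - 1)) ∨
      (pathDist r (n + 1) = pathDist r n - 1 ∧ circleArc r (r - n - 1) - 1 ≤ pathDist r n) := by
  rw [pathDist_succ, sTerm_eq_ite ha]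
  split_ifs with h
  · exact .inl ⟨rfl, le_circleArc_of_focalSum_le h⟩
  · exact .inr ⟨rfl, circleArc_sub_one_le_of_lt_focalSum r.cast_nonneg ha.le (not_le.1 h)⟩

lemma cast_sub_sub_one_mem_Icc {r n : ℕ} (hn : n < 2 * r) :
    (r - n - 1 : ℝ) ∈ Set.Icc (-r : ℝ) r := by
  have : (n + 1 : ℝ) ≤ 2 * r := mod_cast hn
  constructor <;> linarith [(n.cast_nonneg : (0 : ℝ) ≤ n)]

lemma abs_pathDist_zero_sub_circleArc_le {r : ℕ} (hr : 1 ≤ r) :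
    |pathDist r 0 - circleArc r (r - 1)| ≤ 1 := by
  have hr' : (1 : ℝ) ≤ r := mod_cast hr
  have hlower : (r : ℝ) ≤ circleArc r (r - 1) :=
    le_circleArc (abs_le_abs (by linarith) (by linarith))
  have hupper : circleArc r (r - 1) ≤ r + 1 := sqrt_le_iff.2 ⟨by positivity, by linarith⟩
  rw [pathDist_zero, abs_le]
  constructor <;> linarith

theorem abs_pathDist_sub_circleArc_le {r n : ℕ} (hr : 4 ≤ r) (hn : n < 2 * r) :
    |pathDist r n - circleArc r (r - n - 1)| ≤ 3 := by
  have hr' : (4 : ℝ) ≤ r := mod_cast hr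
  have harc : ∀ k : ℕ, k + 1 < 2 * r →
      |circleArc r (r - (k + 1 : ℕ) - 1) - circleArc r (r - k - 1)| ≤ 1 := fun k hk => by
    have h := (lipschitzOnWith_circleArc r).dist_le_mul _ (cast_sub_sub_one_mem_Icc hk) _
      (cast_sub_sub_one_mem_Icc (Nat.lt_of_succ_lt hk))
    have hshift : (r - (k + 1 : ℕ) - 1 - (r - k - 1) : ℝ) = -1 := by push_cast; ring
    rwa [NNReal.coe_one, one_mul, dist_eq, dist_eq, hshift, abs_neg, abs_one] at h
  have h₀ : |pathDist r 0 - circleArc r (r - (0 : ℕ) - 1)| ≤ 2 + 1 := by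
    rw [Nat.cast_zero, sub_zero]
    exact (abs_pathDist_zero_sub_circleArc_le (by omega)).trans (by norm_num)
  rw [← two_add_one_eq_three]
  refine abs_sub_le_of_unit_steps_toward (f := fun k => circleArc r (r - k - 1)) zero_le_one harc h₀
    (fun k hk hclose => ?_) n hn
  have hlower : (r : ℝ) ≤ circleArc r (r - k - 1) := le_circleArc
    ((abs_le.2 (cast_sub_sub_one_mem_Icc (Nat.lt_of_succ_lt hk))).trans (le_abs_self _))
  exact pathDist_succ_dichotomy (by linarith [(abs_le.1 hclose).1])

end SignumCirclePath

section Asymptotics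

open scoped NNReal

lemma abs_mul_sub_integral_le_of_lipschitzOnWith {f : ℝ → ℝ} {K : ℝ≥0} {a b ξ : ℝ}
    (hf : LipschitzOnWith K f (Set.Icc a b)) (hξ : ξ ∈ Set.Icc a b) :
    |(b - a) * f ξ - ∫ x in a..b, f x| ≤ K * (b - a) ^ 2 := by
  have hab : a ≤ b := hξ.1.trans hξ.2
  have hdist : ∀ x ∈ Set.uIoc a b, ‖f ξ - f x‖ ≤ K * (b - a) := fun x hx => by
    rw [Set.uIoc_of_le hab] at hx
    have hx' := Set.Ioc_subset_Icc_self hx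
    calc ‖f ξ - f x‖ ≤ K * dist ξ x := hf.dist_le_mul _ hξ _ hx'
      _ ≤ K * (b - a) := by
        gcongr
        exact Real.dist_le_of_mem_Icc hξ hx'
  calc |(b - a) * f ξ - ∫ x in a..b, f x| = ‖∫ x in a..b, (f ξ - f x)‖ := by
        rw [intervalIntegral.integral_sub intervalIntegrable_const
          (hf.continuousOn.intervalIntegrable_of_Icc hab), intervalIntegral.integral_const,
          smul_eq_mul, norm_eq_abs]
    _ ≤ K * (b - a) * |b - a| := intervalIntegral.norm_integral_le_of_norm_le_const hdist
    _ = K * (b - a) ^ 2 := by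
        rw [abs_of_nonneg (sub_nonneg.2 hab)]
        ring

lemma abs_sum_sub_integral_le_of_lipschitzOnWith {f : ℝ → ℝ} {K : ℝ≥0} {x₀ : ℝ} {N : ℕ} {ξ : ℕ → ℝ}
    (hf : LipschitzOnWith K f (Set.Icc x₀ (x₀ + N)))
    (hξ : ∀ i < N, ξ i ∈ Set.Icc (x₀ + i) (x₀ + i + 1)) :
    |∑ i ∈ range N, f (ξ i) - ∫ x in x₀..x₀ + N, f x| ≤ N * K := by
  have hcell : ∀ i < N, LipschitzOnWith K f (Set.Icc (x₀ + i) (x₀ + i + 1)) := fun i hi => by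
    have : (i + 1 : ℝ) ≤ N := mod_cast hi
    exact hf.mono (Set.Icc_subset_Icc (by simp) (by linarith))
  have hintegrable : ∀ i < N, IntervalIntegrable f MeasureTheory.volume (x₀ + i) (x₀ + i + 1) :=
    fun i hi => (hcell i hi).continuousOn.intervalIntegrable_of_Icc (by linarith)
  have hsum : ∑ i ∈ range N, ∫ x in x₀ + i..x₀ + i + 1, f x = ∫ x in x₀..x₀ + N, f x := by
    simpa [add_assoc] using intervalIntegral.sum_integral_adjacent_intervals (f := f)
      (μ := MeasureTheory.volume) (a := fun i : ℕ => x₀ + i) (n := N)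
      (by simpa [add_assoc] using hintegrable)
  calc |∑ i ∈ range N, f (ξ i) - ∫ x in x₀..x₀ + N, f x|
      ≤ ∑ i ∈ range N, |f (ξ i) - ∫ x in x₀ + i..x₀ + i + 1, f x| := by
        rw [← hsum, ← sum_sub_distrib]
        exact abs_sum_le_sum_abs _ _
    _ ≤ ∑ _i ∈ range N, (K : ℝ) := sum_le_sum fun i hi => by
        have hi' := mem_range.1 hi
        simpa using abs_mul_sub_integral_le_of_lipschitzOnWith (hcell i hi') (hξ i hi')
    _ = N * K := by simp

lemma abs_sum_circleArc_sub_le (r : ℕ) :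
    |∑ n ∈ range (2 * r), circleArc r (r - n - 1) - r ^ 2 * (1 + π / 2)| ≤ 2 * (r : ℝ) := by
  have hend : (-r + (2 * r : ℕ) : ℝ) = r := by push_cast; ring
  have heven : ∀ n : ℕ, circleArc r (r - n - 1) = circleArc r (-r + n + 1) := fun n => by
    unfold circleArc
    ring_nf
  have h := abs_sum_sub_integral_le_of_lipschitzOnWith (f := circleArc r) (K := 1) (x₀ := -r)
    (N := 2 * r) (ξ := fun n => -r + n + 1) (by simpa only [hend] using lipschitzOnWith_circleArc r)
    (fun n _ => ⟨by linarith, le_rfl⟩)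
  rw [hend, integral_circleArc r.cast_nonneg] at h
  simpa [heven] using h

lemma abs_sum_pathDist_sub_le {r : ℕ} (hr : 4 ≤ r) :
    |∑ n ∈ range (2 * r), pathDist r n - r ^ 2 * (1 + π / 2)| ≤ 8 * (r : ℝ) := by
  have htrack : |∑ n ∈ range (2 * r), pathDist r n -
      ∑ n ∈ range (2 * r), circleArc r (r - n - 1)| ≤ 6 * r := calc
    _ ≤ ∑ n ∈ range (2 * r), |pathDist r n - circleArc r (r - n - 1)| := by
      rw [← sum_sub_distrib]
      exact abs_sum_le_sum_abs _ _
    _ ≤ ∑ _n ∈ range (2 * r), (3 : ℝ) :=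
      sum_le_sum fun n hn => abs_pathDist_sub_circleArc_le hr (mem_range.1 hn)
    _ = 6 * r := by
      rw [sum_const, card_range, nsmul_eq_mul]
      push_cast
      ring
  linarith [abs_sub_le (∑ n ∈ range (2 * r), pathDist r n)
    (∑ n ∈ range (2 * r), circleArc r (r - n - 1)) (r ^ 2 * (1 + π / 2)),
    abs_sum_circleArc_sub_le r]

lemma tendsto_div_sq_of_abs_sub_le {S : ℕ → ℝ} {L C : ℝ}
    (h : ∀ᶠ r : ℕ in atTop, |S r - r ^ 2 * L| ≤ C * r) :
    Tendsto (fun r : ℕ => S r / (r : ℝ) ^ 2) atTop (nhds L) := by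
  rw [tendsto_iff_dist_tendsto_zero]
  refine squeeze_zero' (Eventually.of_forall fun _ => dist_nonneg) ?_
    (tendsto_const_div_atTop_nhds_zero_nat C)
  filter_upwards [h, eventually_gt_atTop 0] with r hS hr
  have hr' : (0 : ℝ) < r := mod_cast hr
  calc dist (S r / (r : ℝ) ^ 2) L = |S r - r ^ 2 * L| / (r : ℝ) ^ 2 := by
        rw [dist_eq, ← abs_of_pos (pow_pos hr' 2), ← abs_div, abs_of_pos (pow_pos hr' 2)]
        congr 1
        field_simp
    _ ≤ C * r / (r : ℝ) ^ 2 := by gcongr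
    _ = C / r := by field_simp

end Asymptotics

/-- the harmonic mean `H(r) = 8r² / ∑_{n=0}^{2r-1} aₙ` of the
values `πₙ = 4r/aₙ` along the signum circle path of radius `r`, where
`aₙ = xₙ + yₙ`, converges to `16/(π + 2)` as `r → ∞`. -/
theorem harmonicMean_pi_tendsto :
    Filter.Tendsto (fun r : ℕ =>
      8 * (r : ℝ) ^ 2 / ∑ n ∈ Finset.range (2 * r),
        ((circlePath r n).1 + (circlePath r n).2))
      Filter.atTop (nhds (16 / (Real.pi + 2))) := by
  have hmean : Tendsto (fun r : ℕ => (∑ n ∈ range (2 * r), pathDist r n) / (r : ℝ) ^ 2) atTop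
      (nhds (1 + π / 2)) :=
    tendsto_div_sq_of_abs_sub_le
      ((eventually_ge_atTop 4).mono fun _ hr => abs_sum_pathDist_sub_le hr)
  have hlimit : 8 / (1 + π / 2) = 16 / (π + 2) := by
    field_simp
    ring
  rw [← hlimit]
  refine (tendsto_const_nhds.div hmean (by positivity)).congr fun r => ?_
  simp only [Pi.div_apply, div_div_eq_mul_div, pathDist]
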